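/- Let (W,S) be a Coxeter system of finite rank. Then: (i) the pair (W_e, S_e) is a Coxeter system; (ii) for s,t ∈ S, η(s) = η(t) if and only if s and t are conjugate in W; (iii) if s and t are nonconjugate elements of S, then the order of η(s)η(t) in W_e is the greatest common divisor of the set of all m̄(u,v) such that u,v ∈ S with m(u,v) < ∞, u is conjugate to s in W, and v is conjugate to t in W (the order being ∞ if this set is empty); in particular the order of η(s)η(t) is either even or ∞. -/

import Mathlib

/-!
Let `η : W → W_e` be the quotient map by `N_e`. Everything follows from the universal property of
`W_e` (`exists_quotient_lift`): a map `f` on `S` extends to `W_e` as soon as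
`(f u * f v) ^ m u v = 1`, `f u * f v = 1` when `m u v` is odd, and `(f a * f b) ^ 2 = 1` when
`(a, b)` is special.

* The matrix of the system `(W_e, S_e)` is `(x, y) ↦ orderOf (x * y)`. The universal properties of
  `W_e` and of the Coxeter group of this matrix give mutually inverse homomorphisms
  (`isCoxeterSystemOn_quotient`).
* If `m u v` is odd, then `u` and `v` are conjugate in `W` and `η u = η v`. Hence the indicator
  functions on `S` of a conjugacy class and of a fibre of `η` both extend to homomorphisms to a
  group of order two; they separate nonconjugate generators in `W_e`, respectively show
  that conjugate generators have the same image (`mk_eq_mk_iff_isConj`).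
* If `s` and `t` are not conjugate and `e` divides all relevant `m̄(u, v)`, sending the conjugates
  of `s` in `S` to one standard reflection of the dihedral group of order `2e` (infinite if
  `e = 0`), those of `t` to the other one and the rest of `S` to `1` extends to `W_e`; as
  the product of the two reflections has order `e`, `e` divides the order of `η s * η t`
  (`dvd_orderOf_of_dvd_mbar`). Evenness is the case `e = 2`.
-/

variable {W : Type*} [Group W]

/-- `S` is a set of Coxeter generators of the group `W`, with Coxeter matrix given by the
restriction of `m` to `S × S` (the value `0` of `m` encodes `∞`). -/
def IsCoxeterSystemOn (m : W → W → ℕ) (S : Set W) : Prop :=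
  ∃ (cm : CoxeterMatrix S) (cs : CoxeterSystem cm W),
    (∀ s : S, cs.simple s = (s : W)) ∧ ∀ s t : S, cm.M s t = m s t

/-- The subset `B` is irreducible: its Coxeter diagram (edges between distinct `x, y` with
`m x y > 2`, including `m x y = ∞`, i.e. `m x y = 0`) is nonempty and connected. -/
def IsIrreducibleOn (m : W → W → ℕ) (B : Set W) : Prop :=
  B.Nonempty ∧ ∀ u ∈ B, ∀ v ∈ B,
    Relation.ReflTransGen
      (fun x y => x ∈ B ∧ y ∈ B ∧ x ≠ y ∧ (m x y = 0 ∨ 2 < m x y)) u v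

/-- `B` is a base of the Coxeter system `(W, S)`: the visual subgroup `⟨B⟩` is a noncyclic,
maximal, finite, irreducible visual subgroup. -/
def IsBase (m : W → W → ℕ) (S B : Set W) : Prop :=
  B ⊆ S ∧ IsIrreducibleOn m B ∧ (Subgroup.closure B : Set W).Finite ∧
    ¬ IsCyclic ↥(Subgroup.closure B) ∧
    ∀ B' : Set W, B' ⊆ S → B ⊆ B' → IsIrreducibleOn m B' →
      (Subgroup.closure B' : Set W).Finite → B' = B

/-- The base `B` matches the base `B'`: the commutator subgroups of the visual subgroups
`⟨B⟩` and `⟨B'⟩` are conjugate in `W`. -/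
def Matches (B B' : Set W) : Prop :=
  ∃ w : W,
    Subgroup.map ((MulAut.conj w).toMonoidHom)
        (⁅Subgroup.closure B, Subgroup.closure B⁆ : Subgroup W)
      = ⁅Subgroup.closure B', Subgroup.closure B'⁆

/-- `(⟨B⟩, B)` has the isomorphism type of the Coxeter system of the Coxeter matrix `std`. -/
def HasType (m : W → W → ℕ) (B : Set W) {n : ℕ} (std : Fin n → Fin n → ℕ) : Prop :=
  ∃ e : ↥B ≃ Fin n, ∀ u v : ↥B, m u v = std (e u) (e v)

/-- The Coxeter matrix of type `Aₙ` (Coxeter's notation): linear diagram, all labels 3. -/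
def aMat (n : ℕ) : Fin n → Fin n → ℕ := fun i j =>
  if i = j then 1 else if i.val + 1 = j.val ∨ j.val + 1 = i.val then 3 else 2

/-- The Coxeter matrix of type `Cₙ` in Coxeter's notation (Bourbaki's `Bₙ`):
linear diagram with labels 3, …, 3, 4. -/
def cMat (n : ℕ) : Fin n → Fin n → ℕ := fun i j =>
  if i = j then 1
  else if i.val + 1 = j.val ∨ j.val + 1 = i.val then
    (if i.val + 1 = n ∨ j.val + 1 = n then 4 else 3)
  else 2

/-- The Coxeter matrix of type `Bₙ` in Coxeter's notation (Bourbaki's `Dₙ`), for `n ≥ 3`: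
a chain `0, …, n-2` with labels 3 together with the edge `{n-3, n-1}` labelled 3. -/
def bMat (n : ℕ) : Fin n → Fin n → ℕ := fun i j =>
  if i = j then 1
  else if ((i.val + 1 = j.val ∧ j.val + 2 ≤ n) ∨ (j.val + 1 = i.val ∧ i.val + 2 ≤ n))
      ∨ (i.val + 3 = n ∧ j.val + 1 = n) ∨ (j.val + 3 = n ∧ i.val + 1 = n) then 3
  else 2

/-- The dihedral Coxeter matrix `D₂(k)` (i.e. `I₂(k)`). -/
def d2Mat (k : ℕ) : Fin 2 → Fin 2 → ℕ := fun i j => if i = j then 1 else k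

/-- The Coxeter matrix of type `G₃` in Coxeter's notation (i.e. `H₃`). -/
def g3Mat : Fin 3 → Fin 3 → ℕ := ![![1,3,2], ![3,1,5], ![2,5,1]]

/-- The Coxeter matrix of type `G₄` in Coxeter's notation (i.e. `H₄`). -/
def g4Mat : Fin 4 → Fin 4 → ℕ := ![![1,3,2,2], ![3,1,3,2], ![2,3,1,5], ![2,2,5,1]]

/-- The Coxeter matrix of type `F₄`. -/
def f4Mat : Fin 4 → Fin 4 → ℕ := ![![1,3,2,2], ![3,1,4,2], ![2,4,1,3], ![2,2,3,1]]

/-- The 2-part of `k`: the largest power of 2 dividing `k` (with `0` encoding `∞`;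
the 2-part of `∞` is `∞`). -/
def twoPart (k : ℕ) : ℕ := if k = 0 then 0 else 2 ^ (k.factorization 2)

/-- The subgroup `N_b`: the normal closure in `W` of the elements `(st) ^ b(s,t)` for
`s, t ∈ S` with `m s t < ∞`, where `b(s,t)` is the 2-part of `m s t`. -/
def NbSubgroup (m : W → W → ℕ) (S : Set W) : Subgroup W :=
  Subgroup.normalClosure
    {x | ∃ s ∈ S, ∃ t ∈ S, m s t ≠ 0 ∧ x = (s * t) ^ twoPart (m s t)}

instance (m : W → W → ℕ) (S : Set W) : (NbSubgroup m S).Normal :=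
  Subgroup.normalClosure_normal

/-- `(a, b)` is a special pair of elements of `S`: `m a b ≡ 2 mod 4` and either `v = a` or
`v = b` has the property that `m s a = m s b = 2` for every `s ∈ S \ {a, b}` with
`m s v < ∞`. -/
def IsSpecialPair (m : W → W → ℕ) (S : Set W) (a b : W) : Prop :=
  a ∈ S ∧ b ∈ S ∧ a ≠ b ∧ m a b % 4 = 2 ∧
    ((∀ s ∈ S, s ≠ a → s ≠ b → m s a ≠ 0 → m s a = 2 ∧ m s b = 2) ∨
     (∀ s ∈ S, s ≠ a → s ≠ b → m s b ≠ 0 → m s a = 2 ∧ m s b = 2))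

open scoped Classical in
/-- `m̄ a b = 2` if `(a, b)` is a special pair and `m̄ a b = m a b` otherwise. -/
noncomputable def mbar (m : W → W → ℕ) (S : Set W) (a b : W) : ℕ :=
  if IsSpecialPair m S a b then 2 else m a b

/-- The subgroup `N_e`: the normal closure in `W` of the elements `st` with `m s t` odd
together with the elements `(ab)²` with `(a, b)` a special pair. -/
def NeSubgroup (m : W → W → ℕ) (S : Set W) : Subgroup W :=
  Subgroup.normalClosure
    ({x | ∃ s ∈ S, ∃ t ∈ S, Odd (m s t) ∧ x = s * t} ∪
     {x | ∃ a b : W, IsSpecialPair m S a b ∧ x = (a * b) ^ 2})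

instance (m : W → W → ℕ) (S : Set W) : (NeSubgroup m S).Normal :=
  Subgroup.normalClosure_normal

/-- The word length of `w` with respect to the generating set `B`. -/
noncomputable def wordLength (B : Set W) (w : W) : ℕ :=
  sInf {n | ∃ l : List W, (∀ x ∈ l, x ∈ B) ∧ l.length = n ∧ l.prod = w}

/-- `z` is a longest element of the visual subgroup `⟨B⟩`. -/
def IsLongestElement (B : Set W) (z : W) : Prop :=
  z ∈ Subgroup.closure B ∧
    ∀ w ∈ Subgroup.closure B, wordLength B w ≤ wordLength B z

/-- The basic subgroup `⟨B⟩` of `(W, S)` is reduced: for every set of Coxeter generators `S'`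
of `W`, any base of `(W, S')` matching `B` generates a subgroup of order at least `|⟨B⟩|`. -/
def IsReducedBase (m : W → W → ℕ) (S B : Set W) : Prop :=
  ∀ (S' : Set W) (m' : W → W → ℕ) (B' : Set W),
    IsCoxeterSystemOn m' S' → S'.Finite → IsBase m' S' B' → Matches B B' →
      Nat.card ↥(Subgroup.closure B) ≤ Nat.card ↥(Subgroup.closure B')

/-- The isomorphism type of `(⟨B⟩, B)` belongs to the family `F` of isomorphism types of
Coxeter systems (a family of Coxeter matrices). -/
def TypeIn (F : ∀ n : ℕ, (Fin n → Fin n → ℕ) → Prop) (m : W → W → ℕ) (B : Set W) : Prop :=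
  ∃ (n : ℕ) (Mt : Fin n → Fin n → ℕ), F n Mt ∧ HasType m B Mt

/-- The subgroup `N(F)`: the normal closure in `W` of the commutator subgroups of all
reduced basic subgroups of `(W, S)` of type in `F` together with the commutator subgroups of
all unreduced basic subgroups of `(W, S)` matching a reduced basic subgroup of type in `F`
of another system `(W, S')`. -/
def NFSubgroup (F : ∀ n : ℕ, (Fin n → Fin n → ℕ) → Prop)
    (m : W → W → ℕ) (S : Set W) : Subgroup W :=
  Subgroup.normalClosure
    {x | ∃ B : Set W, IsBase m S B ∧
      x ∈ (⁅Subgroup.closure B, Subgroup.closure B⁆ : Subgroup W) ∧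
      ((IsReducedBase m S B ∧ TypeIn F m B) ∨
       (¬ IsReducedBase m S B ∧ ∃ (S' : Set W) (m' : W → W → ℕ) (B' : Set W),
          IsCoxeterSystemOn m' S' ∧ S'.Finite ∧ IsBase m' S' B' ∧
          IsReducedBase m' S' B' ∧ TypeIn F m' B' ∧ Matches B B'))}

instance (F : ∀ n : ℕ, (Fin n → Fin n → ℕ) → Prop) (m : W → W → ℕ) (S : Set W) :
    (NFSubgroup F m S).Normal :=
  Subgroup.normalClosure_normal

/-- The normal closure, within the subgroup `H`, of the subset `X ⊆ H`,
as a subgroup of the ambient group. -/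
def nClosIn (H : Subgroup W) (X : Set W) : Subgroup W :=
  Subgroup.map H.subtype (Subgroup.normalClosure ((fun x : H => (x : W)) ⁻¹' X))

/-- The generating set for the subgroup `N(⟨B⟩)` of a basic subgroup `⟨B⟩` of rank at least 3:
the commutator subgroup of `⟨B⟩` if the rank is at least 5 or the type is `A₄`, `G₃` or `G₄`;
`a₁a₃` for type `A₃`; `b₁b₂, b₂b₃` (products of distinct commuting generators) for type `B₄`;
`(c₂c₃)²` for type `C₃`; `c₁c₃` for type `C₄`; and `(f₂f₃)²` for type `F₄`. -/
def genSetNB (m : W → W → ℕ) (B : Set W) : Set W :=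
  {x | ((5 ≤ B.ncard ∨ HasType m B (aMat 4) ∨ HasType m B g3Mat ∨ HasType m B g4Mat) ∧
          x ∈ (⁅Subgroup.closure B, Subgroup.closure B⁆ : Subgroup W)) ∨
       (HasType m B (aMat 3) ∧ ∃ u ∈ B, ∃ v ∈ B, u ≠ v ∧ m u v = 2 ∧ x = u * v) ∨
       (HasType m B (bMat 4) ∧ ∃ u ∈ B, ∃ v ∈ B, u ≠ v ∧ m u v = 2 ∧ x = u * v) ∨
       (HasType m B (cMat 3) ∧ ∃ u ∈ B, ∃ v ∈ B, m u v = 4 ∧ x = (u * v) ^ 2) ∨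
       (HasType m B (cMat 4) ∧ ∃ u ∈ B, ∃ p ∈ B, ∃ v ∈ B, ∃ q ∈ B,
          m u p = 3 ∧ m p v = 3 ∧ m v q = 4 ∧ m u v = 2 ∧ x = u * v) ∨
       (HasType m B f4Mat ∧ ∃ u ∈ B, ∃ v ∈ B, m u v = 4 ∧ x = (u * v) ^ 2)}

/-- The subgroup `N(⟨B⟩)` of the visual subgroup `⟨B⟩`, viewed as a subgroup of `W`. -/
def NBSubgroup (m : W → W → ℕ) (B : Set W) : Subgroup W :=
  nClosIn (Subgroup.closure B) (genSetNB m B)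

/-- The subgroup `N(W)`: the normal closure in `W` of the subgroups `N(⟨B⟩)` over all
bases `B` of `(W, S)` of rank greater than 2. -/
def NWSubgroup (m : W → W → ℕ) (S : Set W) : Subgroup W :=
  Subgroup.normalClosure
    {x | ∃ B : Set W, IsBase m S B ∧ 2 < B.ncard ∧ x ∈ NBSubgroup m B}

instance (m : W → W → ℕ) (S : Set W) : (NWSubgroup m S).Normal :=
  Subgroup.normalClosure_normal

section

variable {m : W → W → ℕ} {S : Set W}

/-! ### The Coxeter system `(W, S)` -/

lemma IsCoxeterSystemOn.diag (hcs : IsCoxeterSystemOn m S) {s : W} (hs : s ∈ S) : m s s = 1 := by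
  obtain ⟨cm, cs, h1, h2⟩ := hcs
  rw [← h2 ⟨s, hs⟩ ⟨s, hs⟩, cm.diagonal]

lemma IsCoxeterSystemOn.symm (hcs : IsCoxeterSystemOn m S) {s t : W} (hs : s ∈ S) (ht : t ∈ S) :
    m s t = m t s := by
  obtain ⟨cm, cs, h1, h2⟩ := hcs
  rw [← h2 ⟨s, hs⟩ ⟨t, ht⟩, ← h2 ⟨t, ht⟩ ⟨s, hs⟩, cm.symmetric]

lemma IsCoxeterSystemOn.mul_pow (hcs : IsCoxeterSystemOn m S) {s t : W} (hs : s ∈ S)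
    (ht : t ∈ S) : (s * t) ^ m s t = 1 := by
  obtain ⟨cm, cs, h1, h2⟩ := hcs
  have := cs.simple_mul_simple_pow ⟨s, hs⟩ ⟨t, ht⟩
  rwa [h1, h1, h2] at this

lemma IsCoxeterSystemOn.mul_self (hcs : IsCoxeterSystemOn m S) {s : W} (hs : s ∈ S) :
    s * s = 1 := by
  simpa [hcs.diag hs] using hcs.mul_pow hs hs

lemma IsCoxeterSystemOn.exists_lift (hcs : IsCoxeterSystemOn m S) {G : Type*} [Group G]
    (f : W → G) (h : ∀ u ∈ S, ∀ v ∈ S, (f u * f v) ^ m u v = 1) :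
    ∃ φ : W →* G, ∀ s ∈ S, φ s = f s := by
  obtain ⟨cm, cs, h1, h2⟩ := hcs
  have hl : cm.IsLiftable (fun s : S => f s) := by
    intro u v
    rw [h2]
    exact h u u.2 v v.2
  refine ⟨cs.lift ⟨_, hl⟩, fun s hs => ?_⟩
  have := cs.lift_apply_simple hl ⟨s, hs⟩
  rwa [h1] at this

lemma IsCoxeterSystemOn.closure_eq_top (hcs : IsCoxeterSystemOn m S) :
    Subgroup.closure S = ⊤ := by
  obtain ⟨cm, cs, h1, h2⟩ := hcs
  rw [← cs.subgroup_closure_range_simple]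
  congr 1
  ext x
  constructor
  · intro hx
    exact ⟨⟨x, hx⟩, h1 _⟩
  · rintro ⟨s, rfl⟩
    rw [h1]
    exact s.2

/-! ### The quotient `W_e` and its universal property -/

/-- The universal property of `W_e`. -/
lemma exists_quotient_lift (hcs : IsCoxeterSystemOn m S) {G : Type*} [Group G]
    (f : W → G) (h : ∀ u ∈ S, ∀ v ∈ S, (f u * f v) ^ m u v = 1)
    (hodd : ∀ u ∈ S, ∀ v ∈ S, Odd (m u v) → f u * f v = 1)
    (hspec : ∀ a b, IsSpecialPair m S a b → (f a * f b) ^ 2 = 1) :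
    ∃ φ : W ⧸ NeSubgroup m S →* G,
      ∀ s ∈ S, φ (QuotientGroup.mk' (NeSubgroup m S) s) = f s := by
  obtain ⟨φ, hφ⟩ := hcs.exists_lift f h
  have hle : NeSubgroup m S ≤ φ.ker := by
    refine Subgroup.normalClosure_le_normal ?_
    rintro x (⟨s, hs, t, ht, ho, rfl⟩ | ⟨a, b, hab, rfl⟩)
    · simp [MonoidHom.mem_ker, hφ s hs, hφ t ht, hodd s hs t ht ho]
    · simp [MonoidHom.mem_ker, hφ a hab.1, hφ b hab.2.1, hspec a b hab]
  exact ⟨QuotientGroup.lift _ φ hle, fun s hs => hφ s hs⟩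

lemma mk_mul_mk_of_odd {s t : W} (hs : s ∈ S) (ht : t ∈ S) (ho : Odd (m s t)) :
    QuotientGroup.mk' (NeSubgroup m S) s * QuotientGroup.mk' (NeSubgroup m S) t = 1 := by
  rw [← map_mul, ← MonoidHom.mem_ker, QuotientGroup.ker_mk']
  exact Subgroup.subset_normalClosure (Or.inl ⟨s, hs, t, ht, ho, rfl⟩)

lemma mk_mul_self (hcs : IsCoxeterSystemOn m S) {s : W} (hs : s ∈ S) :
    QuotientGroup.mk' (NeSubgroup m S) s * QuotientGroup.mk' (NeSubgroup m S) s = 1 := by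
  rw [← map_mul, hcs.mul_self hs, map_one]

lemma mk_eq_mk_of_odd (hcs : IsCoxeterSystemOn m S) {s t : W} (hs : s ∈ S) (ht : t ∈ S)
    (ho : Odd (m s t)) :
    QuotientGroup.mk' (NeSubgroup m S) s = QuotientGroup.mk' (NeSubgroup m S) t :=
  mul_right_cancel ((mk_mul_mk_of_odd hs ht ho).trans (mk_mul_self hcs ht).symm)

lemma mk_mul_mk_pow_two {a b : W} (hab : IsSpecialPair m S a b) :
    (QuotientGroup.mk' (NeSubgroup m S) a * QuotientGroup.mk' (NeSubgroup m S) b) ^ 2 = 1 := by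
  rw [← map_mul, ← map_pow, ← MonoidHom.mem_ker, QuotientGroup.ker_mk']
  exact Subgroup.subset_normalClosure (Or.inr ⟨a, b, hab, rfl⟩)

lemma mk_mul_mk_pow (hcs : IsCoxeterSystemOn m S) {s t : W} (hs : s ∈ S) (ht : t ∈ S) :
    (QuotientGroup.mk' (NeSubgroup m S) s * QuotientGroup.mk' (NeSubgroup m S) t) ^ m s t
      = 1 := by
  rw [← map_mul, ← map_pow, hcs.mul_pow hs ht, map_one]

lemma orderOf_mk_mul_mk_dvd_mbar (hcs : IsCoxeterSystemOn m S) {s t : W} (hs : s ∈ S)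
    (ht : t ∈ S) :
    orderOf (QuotientGroup.mk' (NeSubgroup m S) s * QuotientGroup.mk' (NeSubgroup m S) t) ∣
      mbar m S s t := by
  rw [orderOf_dvd_iff_pow_eq_one, mbar]
  split_ifs with h
  · exact mk_mul_mk_pow_two h
  · exact mk_mul_mk_pow hcs hs ht

/-- When `m s t = 2 * k + 1`, the element `(s * t) ^ k` conjugates `s` to `t`. -/
lemma isConj_of_odd (hcs : IsCoxeterSystemOn m S) {s t : W} (hs : s ∈ S) (ht : t ∈ S)
    (ho : Odd (m s t)) : IsConj s t := by
  obtain ⟨k, hk⟩ := ho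
  have hss := hcs.mul_self hs
  have htt := hcs.mul_self ht
  have hst := hcs.mul_pow hs ht
  rw [hk] at hst
  have hsi : s⁻¹ = s := inv_eq_of_mul_eq_one_right hss
  have hti : t⁻¹ = t := inv_eq_of_mul_eq_one_right htt
  have h1 : SemiconjBy s ((s * t)⁻¹) (s * t) := by
    simp only [SemiconjBy, mul_inv_rev, hsi, hti, mul_assoc]
  have h2 := h1.pow_right k
  have h3 : ((s * t)⁻¹) ^ k = (s * t) ^ (k + 1) := by
    rw [inv_pow, inv_eq_iff_mul_eq_one, ← pow_add, ← hst]
    congr 1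
    omega
  rw [h3, SemiconjBy, pow_succ', ← mul_assoc, ← mul_assoc, hss, one_mul] at h2
  exact isConj_iff.2 ⟨(s * t) ^ k, by rw [← h2, mul_inv_cancel_right]⟩

/-! ### The Coxeter system `(W_e, S_e)` -/

/-- The images of `S` are Coxeter generators of `W_e`, the matrix being given by the orders
of the products of two generators. -/
lemma isCoxeterSystemOn_quotient (hcs : IsCoxeterSystemOn m S) :
    IsCoxeterSystemOn (fun x y : W ⧸ NeSubgroup m S => orderOf (x * y))
      (QuotientGroup.mk' (NeSubgroup m S) '' S) := by
  classical
  set η := QuotientGroup.mk' (NeSubgroup m S) with hη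
  have hinv : ∀ x : η '' S, (x : W ⧸ NeSubgroup m S) * x = 1 := by
    rintro ⟨_, s, hs, rfl⟩
    exact mk_mul_self hcs hs
  let cm : CoxeterMatrix (η '' S) :=
    { M := Matrix.of fun x y => orderOf ((x : W ⧸ NeSubgroup m S) * y)
      isSymm := by
        ext x y
        rw [Matrix.transpose_apply, Matrix.of_apply, Matrix.of_apply, ← orderOf_inv, mul_inv_rev,
          inv_eq_of_mul_eq_one_right (hinv x), inv_eq_of_mul_eq_one_right (hinv y)]
      diagonal := fun x => by simp [hinv]
      off_diagonal := fun x y hxy h => by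
        rw [Matrix.of_apply, orderOf_eq_one_iff] at h
        exact hxy (Subtype.ext (mul_right_cancel (h.trans (hinv y).symm))) }
  have hcm : ∀ x y : η '' S, cm.M x y = orderOf ((x : W ⧸ NeSubgroup m S) * y) :=
    fun _ _ => rfl
  -- The map on `S` underlying the homomorphism from `W_e`; its value off `S` is irrelevant.
  let f : W → cm.Group := fun w =>
    if hw : w ∈ S then cm.simple ⟨η w, w, hw, rfl⟩ else 1
  have hf : ∀ w (hw : w ∈ S), f w = cm.simple ⟨η w, w, hw, rfl⟩ := fun w hw => dif_pos hw
  have hpow : ∀ (x y : η '' S) (n : ℕ), ((x : W ⧸ NeSubgroup m S) * y) ^ n = 1 →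
      (cm.simple x * cm.simple y) ^ n = 1 := by
    intro x y n hn
    obtain ⟨k, rfl⟩ := orderOf_dvd_of_pow_eq_one hn
    rw [pow_mul, ← hcm]
    have := cm.toCoxeterSystem.simple_mul_simple_pow x y
    rw [cm.toCoxeterSystem_simple] at this
    rw [this, one_pow]
  obtain ⟨φ, hφ⟩ := exists_quotient_lift hcs f
    (fun u hu v hv => by
      rw [hf u hu, hf v hv]
      exact hpow _ _ _ (mk_mul_mk_pow hcs hu hv))
    (fun u hu v hv ho => by
      rw [hf u hu, hf v hv]
      simpa using hpow ⟨η u, u, hu, rfl⟩ ⟨η v, v, hv, rfl⟩ 1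
        (by rw [pow_one]; exact mk_mul_mk_of_odd hu hv ho))
    (fun a b hab => by
      rw [hf a hab.1, hf b hab.2.1]
      exact hpow _ _ _ (mk_mul_mk_pow_two hab))
  have hl : cm.IsLiftable (fun x : η '' S => (x : W ⧸ NeSubgroup m S)) := by
    intro x y
    rw [hcm]
    exact pow_orderOf_eq_one _
  let ψ : cm.Group →* W ⧸ NeSubgroup m S := cm.toCoxeterSystem.lift ⟨_, hl⟩
  have hψ : ∀ x : η '' S, ψ (cm.simple x) = x := by
    intro x
    have := cm.toCoxeterSystem.lift_apply_simple hl x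
    rwa [cm.toCoxeterSystem_simple] at this
  have h1 : φ.comp ψ = MonoidHom.id _ := by
    refine cm.toCoxeterSystem.ext_simple ?_
    rintro ⟨_, s, hs, rfl⟩
    rw [cm.toCoxeterSystem_simple, MonoidHom.comp_apply, hψ, MonoidHom.id_apply]
    exact (hφ s hs).trans (hf s hs)
  have h2 : ψ.comp φ = MonoidHom.id _ := by
    refine QuotientGroup.monoidHom_ext _ ?_
    refine MonoidHom.eq_of_eqOn_dense hcs.closure_eq_top ?_
    intro s hs
    change ψ (φ (η s)) = η s
    rw [hφ s hs, hf s hs, hψ]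
  let cs : CoxeterSystem cm (W ⧸ NeSubgroup m S) :=
    ⟨MonoidHom.toMulEquiv φ ψ h2 h1⟩
  refine ⟨cm, cs, fun x => ?_, fun x y => rfl⟩
  exact hψ x

/-! ### Conjugacy of generators -/

/-- A property of generators that is invariant under odd edges of the Coxeter diagram is detected
by a homomorphism from `W_e` to the group `ℤˣ` of order two. -/
lemma exists_sign_hom (hcs : IsCoxeterSystemOn m S) (p : W → Prop)
    (hp : ∀ u ∈ S, ∀ v ∈ S, Odd (m u v) → (p u ↔ p v)) :
    ∃ φ : W ⧸ NeSubgroup m S →* ℤˣ,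
      ∀ s ∈ S, (φ (QuotientGroup.mk' (NeSubgroup m S) s) = -1 ↔ p s) := by
  classical
  have hsq : ∀ x : ℤˣ, x ^ 2 = 1 := fun x => by rw [pow_two, Int.units_mul_self]
  let f : W → ℤˣ := fun w => if p w then -1 else 1
  have hodd : ∀ u ∈ S, ∀ v ∈ S, Odd (m u v) → f u * f v = 1 := by
    intro u hu v hv ho
    have : f u = f v := by simp only [f, hp u hu v hv ho]
    rw [this, Int.units_mul_self]
  obtain ⟨φ, hφ⟩ := exists_quotient_lift hcs f
    (fun u hu v hv => by
      rcases Nat.even_or_odd (m u v) with he | ho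
      · obtain ⟨k, hk⟩ := he.two_dvd
        rw [hk, pow_mul, hsq, one_pow]
      · rw [hodd u hu v hv ho, one_pow])
    hodd (fun a b _ => hsq _)
  refine ⟨φ, fun s hs => ?_⟩
  rw [hφ s hs]
  by_cases h : p s <;> simp [f, h]

lemma mk_eq_mk_iff_isConj (hcs : IsCoxeterSystemOn m S) {s t : W} (hs : s ∈ S) (ht : t ∈ S) :
    QuotientGroup.mk' (NeSubgroup m S) s = QuotientGroup.mk' (NeSubgroup m S) t ↔
      IsConj s t := by
  constructor
  · intro h
    obtain ⟨φ, hφ⟩ := exists_sign_hom hcs (fun u => IsConj s u) (fun u hu v hv ho =>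
      have huv := isConj_of_odd hcs hu hv ho
      ⟨fun h => h.trans huv, fun h => h.trans huv.symm⟩)
    rw [← hφ t ht, ← h]
    exact (hφ s hs).2 (IsConj.refl s)
  · intro h
    obtain ⟨φ, hφ⟩ := exists_sign_hom hcs
      (fun u => QuotientGroup.mk' (NeSubgroup m S) s = QuotientGroup.mk' (NeSubgroup m S) u)
      (fun u hu v hv ho => by rw [mk_eq_mk_of_odd hcs hu hv ho])
    have hc := isConj_iff_eq.1 ((φ.comp (QuotientGroup.mk' (NeSubgroup m S))).map_isConj h)
    rw [MonoidHom.comp_apply, MonoidHom.comp_apply] at hc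
    rw [← hφ t ht, ← hc]
    exact (hφ s hs).2 rfl

/-! ### The order of `η s * η t` -/

lemma mbar_dvd {V : Type*} (m : V → V → ℕ) (S : Set V) (u v : V) : mbar m S u v ∣ m u v := by
  rw [mbar]
  split_ifs with h
  · have := h.2.2.2.1
    omega
  · exact dvd_rfl

lemma mbar_comm (hcs : IsCoxeterSystemOn m S) {u v : W} (hu : u ∈ S) (hv : v ∈ S) :
    mbar m S u v = mbar m S v u := by
  have key : ∀ {a b : W}, IsSpecialPair m S a b → IsSpecialPair m S b a := by
    rintro a b ⟨ha, hb, hne, hm, h⟩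
    refine ⟨hb, ha, hne.symm, by rwa [hcs.symm hb ha], ?_⟩
    rcases h with h | h
    · exact Or.inr fun s hs h1 h2 h3 => (h s hs h2 h1 h3).symm
    · exact Or.inl fun s hs h1 h2 h3 => (h s hs h2 h1 h3).symm
  rw [mbar, mbar, hcs.symm hu hv]
  by_cases h : IsSpecialPair m S u v
  · rw [if_pos h, if_pos (key h)]
  · rw [if_neg h, if_neg (mt key h)]

/-- A common divisor `e` of the `m̄(u, v)` divides the order of `η s * η t`: there is a
homomorphism from `W_e` to the dihedral group of order `2 * e` that sends `η s * η t` to the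
standard rotation. -/
lemma dvd_orderOf_of_dvd_mbar (hcs : IsCoxeterSystemOn m S) {s t : W} (hs : s ∈ S) (ht : t ∈ S)
    (hst : ¬ IsConj s t) (e : ℕ)
    (he : ∀ u ∈ S, ∀ v ∈ S, m u v ≠ 0 → IsConj u s → IsConj v t → e ∣ mbar m S u v) :
    e ∣ orderOf (QuotientGroup.mk' (NeSubgroup m S) s *
      QuotientGroup.mk' (NeSubgroup m S) t) := by
  classical
  let f : W → DihedralGroup e := fun w =>
    if IsConj w s then .sr 0 else if IsConj w t then .sr 1 else 1
  have hfs : ∀ w, IsConj w s → f w = .sr 0 := fun w hw => if_pos hw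
  have hft : ∀ w, IsConj w t → f w = .sr 1 := fun w hw => by
    have : ¬ IsConj w s := fun h => hst (h.symm.trans hw)
    exact (if_neg this).trans (if_pos hw)
  have hf1 : ∀ w, ¬ IsConj w s → ¬ IsConj w t → f w = 1 := fun w h1 h2 =>
    (if_neg h1).trans (if_neg h2)
  have hsq : ∀ w, f w * f w = 1 := by
    intro w
    simp only [f]
    split_ifs <;> simp
  have hodd : ∀ u ∈ S, ∀ v ∈ S, Odd (m u v) → f u * f v = 1 := by
    intro u hu v hv ho
    have huv := isConj_of_odd hcs hu hv ho
    have h : ∀ w, IsConj u w ↔ IsConj v w := fun w =>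
      ⟨fun h => huv.symm.trans h, fun h => huv.trans h⟩
    have : f u = f v := by simp only [f, h]
    rw [this, hsq]
  have hcross : ∀ u ∈ S, ∀ v ∈ S, m u v ≠ 0 → IsConj u s → IsConj v t →
      (f u * f v) ^ mbar m S u v = 1 := by
    intro u hu v hv hm hus hvt
    rw [hfs u hus, hft v hvt, DihedralGroup.sr_mul_sr, sub_zero,
      ← orderOf_dvd_iff_pow_eq_one, DihedralGroup.orderOf_r_one]
    exact he u hu v hv hm hus hvt
  -- In all cases but the two crossing ones, `f u * f v` has order at most two.
  have hmain : ∀ u ∈ S, ∀ v ∈ S, m u v ≠ 0 →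
      (f u * f v) ^ mbar m S u v = 1 ∨ (f u * f v) ^ 2 = 1 := by
    intro u hu v hv hm
    by_cases hus : IsConj u s
    · by_cases hvt : IsConj v t
      · exact Or.inl (hcross u hu v hv hm hus hvt)
      · right
        by_cases hvs : IsConj v s
        · rw [hfs u hus, ← hfs v hvs, hsq, one_pow]
        · rw [hf1 v hvs hvt, mul_one, pow_two, hsq]
    · by_cases hut : IsConj u t
      · by_cases hvs : IsConj v s
        · left
          have := hcross v hv u hu (by rwa [hcs.symm hv hu]) hvs hut
          rw [mbar_comm hcs hu hv, ← inv_inj, ← inv_pow, mul_inv_rev,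
            inv_eq_of_mul_eq_one_right (hsq u), inv_eq_of_mul_eq_one_right (hsq v), this,
            inv_one]
        · right
          by_cases hvt : IsConj v t
          · rw [hft u hut, ← hft v hvt, hsq, one_pow]
          · rw [hf1 v hvs hvt, mul_one, pow_two, hsq]
      · right
        rw [hf1 u hus hut, one_mul, pow_two, hsq]
  obtain ⟨φ, hφ⟩ := exists_quotient_lift hcs f
    (fun u hu v hv => by
      rcases eq_or_ne (m u v) 0 with hm | hm
      · rw [hm, pow_zero]
      rcases Nat.even_or_odd (m u v) with hev | ho
      · rcases hmain u hu v hv hm with h | h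
        · obtain ⟨k, hk⟩ := mbar_dvd m S u v
          rw [hk, pow_mul, h, one_pow]
        · obtain ⟨k, hk⟩ := hev.two_dvd
          rw [hk, pow_mul, h, one_pow]
      · rw [hodd u hu v hv ho, one_pow])
    hodd
    (fun a b hab => by
      have hm : m a b ≠ 0 := by
        have := hab.2.2.2.1
        omega
      have hb : mbar m S a b = 2 := if_pos hab
      rcases hmain a hab.1 b hab.2.1 hm with h | h
      · rwa [hb] at h
      · exact h)
  have h := orderOf_map_dvd φ
    (QuotientGroup.mk' (NeSubgroup m S) s * QuotientGroup.mk' (NeSubgroup m S) t)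
  rwa [map_mul, hφ s hs, hφ t ht, hfs s (IsConj.refl s), hft t (IsConj.refl t),
    DihedralGroup.sr_mul_sr, sub_zero, DihedralGroup.orderOf_r_one] at h

end

/-- In the quotient of `(W,S)` by `N_e`: the images of `S` form a Coxeter
system; two generators have the same image iff they are conjugate; and for nonconjugate
`s, t ∈ S` the order of `η s * η t` is the gcd of the `m̄(u,v)` over pairs with `m u v < ∞`,
`u` conjugate to `s` and `v` conjugate to `t` (expressed by the universal property of the
gcd in `ℕ`, which gives `0`, i.e. `∞`, when the set is empty), and it is even or `∞`. -/
theorem even_quotient (m : W → W → ℕ) (S : Set W)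
    (hcs : IsCoxeterSystemOn m S) (hfin : S.Finite) :
    (∃ me : W ⧸ NeSubgroup m S → W ⧸ NeSubgroup m S → ℕ,
        IsCoxeterSystemOn me (QuotientGroup.mk' (NeSubgroup m S) '' S)) ∧
    (∀ s ∈ S, ∀ t ∈ S,
        (QuotientGroup.mk' (NeSubgroup m S) s = QuotientGroup.mk' (NeSubgroup m S) t ↔
          IsConj s t)) ∧
    (∀ s ∈ S, ∀ t ∈ S, ¬ IsConj s t →
        (∀ u ∈ S, ∀ v ∈ S, m u v ≠ 0 → IsConj u s → IsConj v t →
          orderOf (QuotientGroup.mk' (NeSubgroup m S) s *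
            QuotientGroup.mk' (NeSubgroup m S) t) ∣ mbar m S u v) ∧
        (∀ e : ℕ,
          (∀ u ∈ S, ∀ v ∈ S, m u v ≠ 0 → IsConj u s → IsConj v t → e ∣ mbar m S u v) →
          e ∣ orderOf (QuotientGroup.mk' (NeSubgroup m S) s *
            QuotientGroup.mk' (NeSubgroup m S) t)) ∧
        (Even (orderOf (QuotientGroup.mk' (NeSubgroup m S) s *
            QuotientGroup.mk' (NeSubgroup m S) t)) ∨
          orderOf (QuotientGroup.mk' (NeSubgroup m S) s *
            QuotientGroup.mk' (NeSubgroup m S) t) = 0)) := by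
  refine ⟨⟨_, isCoxeterSystemOn_quotient hcs⟩,
    fun s hs t ht => mk_eq_mk_iff_isConj hcs hs ht, fun s hs t ht hst => ⟨?_, ?_, ?_⟩⟩
  · intro u hu v hv _ hus hvt
    rw [← (mk_eq_mk_iff_isConj hcs hu hs).2 hus, ← (mk_eq_mk_iff_isConj hcs hv ht).2 hvt]
    exact orderOf_mk_mul_mk_dvd_mbar hcs hu hv
  · exact fun e he => dvd_orderOf_of_dvd_mbar hcs hs ht hst e he
  · left
    rw [even_iff_two_dvd]
    refine dvd_orderOf_of_dvd_mbar hcs hs ht hst 2 fun u hu v hv _ hus hvt => ?_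
    rw [mbar]
    split_ifs
    · exact dvd_rfl
    -- An odd `m u v` would make `s` and `t` conjugate through `u` and `v`.
    · rw [← even_iff_two_dvd, ← Nat.not_odd_iff_even]
      exact fun ho => hst (hus.symm.trans ((isConj_of_odd hcs hu hv ho).trans hvt))
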